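/- Let L be a finite-dimensional Lie algebra over a field F. Then L is supersolvable if and only if for every maximal subalgebra M of L, every ideal completion C of M in L satisfies dim(C/k(C)) = 1. -/

import Mathlib

/-- The strict core `k(B)` of a subalgebra `B` of `L`: the sum of all ideals of `L` that are
proper subalgebras of `B`. -/
def strictCore {F L : Type*} [Field F] [LieRing L] [LieAlgebra F L]
    (B : LieSubalgebra F L) : LieIdeal F L :=
  sSup {I : LieIdeal F L | (I : LieSubalgebra F L) < B}

/-- `C` is a completion of the maximal subalgebra `M` of `L` if `C` is not contained in `M`
but every proper subalgebra of `C` that is an ideal of `L` is contained in `M`.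
The set of completions of `M` is the index complex `I(M)`. -/
def IsCompletion {F L : Type*} [Field F] [LieRing L] [LieAlgebra F L]
    (M C : LieSubalgebra F L) : Prop :=
  ¬ C ≤ M ∧ ∀ I : LieIdeal F L, (I : LieSubalgebra F L) < C → (I : LieSubalgebra F L) ≤ M

/-- A maximal completion of `M`: a maximal element of the index complex `I(M)` under inclusion. -/
def IsMaxCompletion {F L : Type*} [Field F] [LieRing L] [LieAlgebra F L]
    (M C : LieSubalgebra F L) : Prop :=
  IsCompletion M C ∧ ∀ D : LieSubalgebra F L, IsCompletion M D → C ≤ D → C = D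

/-- The quotient of a subalgebra `C` of `L` by (the pullback along the inclusion of) an ideal
`K` of `L`. -/
abbrev quotIn {F L : Type*} [Field F] [LieRing L] [LieAlgebra F L]
    (C : LieSubalgebra F L) (K : LieIdeal F L) : Type _ :=
  C ⧸ LieIdeal.comap C.incl K

/-- The quotient Lie algebra `C / k(C)`. -/
abbrev quotCore {F L : Type*} [Field F] [LieRing L] [LieAlgebra F L]
    (C : LieSubalgebra F L) : Type _ :=
  quotIn C (strictCore C)

/-- The largest ideal of `L` contained in the subalgebra `B`, denoted `B_L`. -/
def idealCore {F L : Type*} [Field F] [LieRing L] [LieAlgebra F L]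
    (B : LieSubalgebra F L) : LieIdeal F L :=
  sSup {I : LieIdeal F L | (I : LieSubalgebra F L) ≤ B}

/-- A subalgebra `B` of `L` is a c-ideal of `L` if there is an ideal `C` of `L` such that
`L = B + C` and `B ∩ C ≤ B_L`. -/
def IsCIdeal {F L : Type*} [Field F] [LieRing L] [LieAlgebra F L]
    (B : LieSubalgebra F L) : Prop :=
  ∃ C : LieIdeal F L, B ⊔ (C : LieSubalgebra F L) = ⊤ ∧
    B ⊓ (C : LieSubalgebra F L) ≤ (idealCore B : LieSubalgebra F L)

/-- A Lie algebra is supersolvable if it has a chain of ideals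
`0 = I_0 ⊆ I_1 ⊆ ... ⊆ I_n = L` with `dim I_j = j` for each `j`. -/
def IsSupersolvableLieAlgebra (F L : Type*) [Field F] [LieRing L] [LieAlgebra F L] : Prop :=
  ∃ (n : ℕ) (I : Fin (n + 1) → LieIdeal F L), I 0 = ⊥ ∧ I (Fin.last n) = ⊤ ∧
    Monotone I ∧ ∀ j : Fin (n + 1), Module.finrank F (I j) = (j : ℕ)

/-- The natural quotient map `L → L ⧸ B` as a morphism of Lie algebras. -/
def lieQuotMk {F L : Type*} [Field F] [LieRing L] [LieAlgebra F L] (B : LieIdeal F L) :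
    L →ₗ⁅F⁆ L ⧸ B :=
  { (LieSubmodule.Quotient.mk' B).toLinearMap with
    map_lie' := rfl }

/-- A subalgebra `C` of `L` is a subideal of `L` if there is a chain of subalgebras
`C = C_0 ⊆ C_1 ⊆ ... ⊆ C_n = L` in which each `C_i` is an ideal of `C_{i+1}`. -/
def IsSubideal {F L : Type*} [Field F] [LieRing L] [LieAlgebra F L]
    (C : LieSubalgebra F L) : Prop :=
  ∃ (n : ℕ) (f : Fin (n + 1) → LieSubalgebra F L), f 0 = C ∧ f (Fin.last n) = ⊤ ∧
    ∀ i : Fin n, f i.castSucc ≤ f i.succ ∧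
      ∀ x ∈ f i.succ, ∀ y ∈ f i.castSucc, ⁅x, y⁆ ∈ f i.castSucc

/-- The Frattini subalgebra: the intersection of all maximal subalgebras of `L`. -/
def frattiniSubalgebra (F L : Type*) [Field F] [LieRing L] [LieAlgebra F L] :
    LieSubalgebra F L :=
  sInf {M : LieSubalgebra F L | IsCoatom M}

/-- The Frattini ideal: the largest ideal of `L` contained in the Frattini subalgebra. -/
def frattiniIdeal (F L : Type*) [Field F] [LieRing L] [LieAlgebra F L] : LieIdeal F L :=
  idealCore (frattiniSubalgebra F L)

section Submodules

variable {F V : Type*} [Field F] [AddCommGroup V] [Module F V] [FiniteDimensional F V]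

/-- A subspace of codimension one in a larger subspace is cut out there by a linear form. -/
theorem exists_linearForm_of_finrank_eq_add_one {J J' : Submodule F V} (hle : J ≤ J')
    (hrank : Module.finrank F J' = Module.finrank F J + 1) :
    ∃ c ∈ J', ∃ f : V →ₗ[F] F, (∀ x ∈ J, f x = 0) ∧ f c = 1 ∧ ∀ x ∈ J', x - f x • c ∈ J := by
  have hlt : J < J' := lt_of_le_of_ne hle fun h => by rw [h] at hrank; omega
  obtain ⟨c, hc, hcJ⟩ := SetLike.exists_of_lt hlt
  obtain ⟨g, hg, hJg⟩ := Submodule.exists_le_ker_of_notMem hcJ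
  have hsup : J ⊔ Submodule.span F {c} = J' := by
    refine Submodule.eq_of_le_of_finrank_le
      (sup_le hle ((Submodule.span_singleton_le_iff_mem _ _).2 hc)) ?_
    rw [hrank]
    refine Nat.succ_le_of_lt (Submodule.finrank_lt_finrank_of_lt ?_)
    exact lt_of_le_of_ne le_sup_left fun h => hcJ
      (h ▸ (le_sup_right : _ ≤ J ⊔ Submodule.span F {c}) (Submodule.mem_span_singleton_self c))
  refine ⟨c, hc, (g c)⁻¹ • g, fun x hx => ?_, ?_, fun x hx => ?_⟩
  · simp [LinearMap.mem_ker.1 (hJg hx)]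
  · simp [inv_mul_cancel₀ hg]
  · rw [← hsup] at hx
    obtain ⟨y, hy, z, hz, rfl⟩ := Submodule.mem_sup.1 hx
    obtain ⟨r, rfl⟩ := Submodule.mem_span_singleton.1 hz
    have hgy : g y = 0 := hJg hy
    have : (g c)⁻¹ * (r * g c) = r := by field_simp
    simpa [hgy, this] using hy

/-- An endomorphism that preserves `K ≤ A` and is injective on `A / K` is surjective there. -/
theorem exists_sub_mem_of_injective_mod {K A : Submodule F V} (T : V →ₗ[F] V)
    (hTK : ∀ x ∈ K, T x ∈ K) (hTA : ∀ x ∈ A, T x ∈ A) (hinj : ∀ x ∈ A, T x ∈ K → x ∈ K)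
    {a : V} (ha : a ∈ A) : ∃ a' ∈ A, a - T a' ∈ K := by
  let p : A →ₗ[F] V ⧸ K := K.mkQ ∘ₗ A.subtype
  let g : A →ₗ[F] V ⧸ K := K.mkQ ∘ₗ T ∘ₗ A.subtype
  have hker : LinearMap.ker g = LinearMap.ker p := by
    ext x
    simp only [g, p, LinearMap.mem_ker, LinearMap.comp_apply, Submodule.mkQ_apply,
      Submodule.Quotient.mk_eq_zero, Submodule.subtype_apply]
    exact ⟨hinj x x.2, hTK x⟩
  have hle : LinearMap.range g ≤ LinearMap.range p := by
    rintro _ ⟨x, rfl⟩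
    exact ⟨⟨T x, hTA x x.2⟩, rfl⟩
  have hrange : LinearMap.range g = LinearMap.range p := by
    refine Submodule.eq_of_le_of_finrank_eq hle ?_
    have h₁ := g.finrank_range_add_finrank_ker
    have h₂ := p.finrank_range_add_finrank_ker
    rw [hker] at h₁
    omega
  obtain ⟨a', ha'⟩ : p ⟨a, ha⟩ ∈ LinearMap.range g := hrange ▸ ⟨_, rfl⟩
  exact ⟨a', a'.2, (Submodule.Quotient.eq K).1 ha'.symm⟩

end Submodules

section LieIdeals

variable {F L : Type*} [Field F] [LieRing L] [LieAlgebra F L]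

/-- There is a chain of ideals of `L` from `J` up to `L` in which each dimension exceeds the
previous one by one. -/
inductive HasFlagAbove : LieIdeal F L → Prop
  | top : HasFlagAbove ⊤
  | step {J J' : LieIdeal F L} (hle : J ≤ J')
      (hrank : Module.finrank F J' = Module.finrank F J + 1) (h : HasFlagAbove J') :
      HasFlagAbove J

/-- The elements `v` of `X` with `⁅c, v⁆ - ℓ c • v ∈ K` form an ideal if `c` spans an ideal modulo
`J` and the elements of `J` act on `X / K` through the character `ℓ`. -/
def twistedKer (ℓ : L →ₗ[F] F) (hℓ : ∀ s t : L, ℓ ⁅s, t⁆ = 0) (K X J : LieIdeal F L) (c : L)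
    (hc : ∀ t : L, ∃ μ : F, ⁅t, c⁆ - μ • c ∈ J)
    (hJ : ∀ j ∈ J, ∀ v ∈ X, ⁅j, v⁆ - ℓ j • v ∈ K) : LieIdeal F L where
  carrier := {v | v ∈ X ∧ ⁅c, v⁆ - ℓ c • v ∈ K}
  zero_mem' := by simp
  add_mem' := by
    rintro v w ⟨hv, hv'⟩ ⟨hw, hw'⟩
    refine ⟨add_mem hv hw, ?_⟩
    have := add_mem hv' hw'
    rwa [show ⁅c, v⁆ - ℓ c • v + (⁅c, w⁆ - ℓ c • w) = ⁅c, v + w⁆ - ℓ c • (v + w) by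
      rw [lie_add, smul_add]; abel] at this
  smul_mem' := by
    rintro r v ⟨hv, hv'⟩
    refine ⟨X.smul_mem r hv, ?_⟩
    have := K.smul_mem r hv'
    rwa [smul_sub, ← lie_smul, smul_comm] at this
  lie_mem := by
    rintro t v ⟨hv, hv'⟩
    refine ⟨lie_mem_right F L X t v hv, ?_⟩
    obtain ⟨μ, hμ⟩ := hc t
    have h₁ := hJ _ hμ v hv
    have h₂ := lie_mem_right F L K t _ hv'
    have h₃ := K.smul_mem μ hv'
    have := sub_mem (sub_mem h₂ h₁) h₃
    convert this using 1
    simp only [map_sub, map_smul, hℓ, sub_lie, smul_lie, lie_sub, lie_smul, lie_lie t c v,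
      smul_eq_mul, zero_sub, neg_smul, smul_sub, mul_smul]
    abel

theorem mem_twistedKer {ℓ : L →ₗ[F] F} {hℓ : ∀ s t : L, ℓ ⁅s, t⁆ = 0} {K X J : LieIdeal F L} {c : L}
    {hc : ∀ t : L, ∃ μ : F, ⁅t, c⁆ - μ • c ∈ J}
    {hJ : ∀ j ∈ J, ∀ v ∈ X, ⁅j, v⁆ - ℓ j • v ∈ K} {v : L} :
    v ∈ twistedKer ℓ hℓ K X J c hc hJ ↔ v ∈ X ∧ ⁅c, v⁆ - ℓ c • v ∈ K :=
  Iff.rfl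

theorem lieQuotMk_ad_pow (K : LieIdeal F L) (x y : L) (n : ℕ) :
    ((LieAlgebra.ad F (L ⧸ K) (lieQuotMk K x)) ^ n) (lieQuotMk K y) =
      lieQuotMk K (((LieAlgebra.ad F L x) ^ n) y) := by
  induction n with
  | zero => simp
  | succ n ih => rw [pow_succ', pow_succ', Module.End.mul_apply, Module.End.mul_apply, ih,
      LieAlgebra.ad_apply, LieAlgebra.ad_apply, LieHom.map_lie]

theorem lieQuotMk_eq_zero {K : LieIdeal F L} {x : L} : lieQuotMk K x = 0 ↔ x ∈ K :=
  LieSubmodule.Quotient.mk_eq_zero K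

theorem strictCore_le {C K : LieIdeal F L} (h : ∀ I : LieIdeal F L, I < C → I ≤ K) :
    strictCore (C : LieSubalgebra F L) ≤ K :=
  sSup_le fun I hI => h I hI

theorem le_strictCore {C I : LieIdeal F L} (h : I < C) :
    I ≤ strictCore (C : LieSubalgebra F L) :=
  le_sSup h

theorem IsCompletion.strictCore_toLieSubalgebra_le {M : LieSubalgebra F L} {C : LieIdeal F L}
    (hC : IsCompletion M (C : LieSubalgebra F L)) :
    (strictCore (C : LieSubalgebra F L) : LieSubalgebra F L) ≤ M := by
  have h : (strictCore (C : LieSubalgebra F L)).toSubmodule ≤ M.toSubmodule := by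
    rw [strictCore, LieSubmodule.sSup_toSubmodule]
    refine sSup_le ?_
    rintro _ ⟨I, hI, rfl⟩
    exact hC.2 I hI
  exact h

/-- The strict core of an ideal completion is a maximal proper `L`-ideal of it. -/
theorem IsCompletion.strictCore_covBy {M : LieSubalgebra F L} {C : LieIdeal F L}
    (hC : IsCompletion M (C : LieSubalgebra F L)) : strictCore (C : LieSubalgebra F L) ⋖ C := by
  have hle : strictCore (C : LieSubalgebra F L) ≤ C := strictCore_le fun I hI => hI.le
  refine ⟨lt_of_le_of_ne hle fun h => hC.1 ?_, fun I hI hIC => hI.not_ge (le_strictCore hIC)⟩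
  exact h ▸ hC.strictCore_toLieSubalgebra_le

/-- A flag of ideals above `J`, indexed by dimension. -/
theorem HasFlagAbove.exists_chain {J : LieIdeal F L} (hJ : HasFlagAbove J) :
    ∃ c : ℕ → LieIdeal F L, Monotone c ∧ (∀ j, J ≤ c j) ∧
      ∀ j, Module.finrank F J ≤ j → j ≤ Module.finrank F L → Module.finrank F (c j) = j := by
  induction hJ with
  | top =>
    refine ⟨fun _ => ⊤, monotone_const, fun _ => le_rfl, fun j h₁ h₂ => ?_⟩
    have : Module.finrank F (⊤ : LieIdeal F L) = Module.finrank F L :=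
      finrank_top (R := F) (M := L)
    dsimp only
    omega
  | @step J J' hle hrank _ ih =>
    obtain ⟨c, hmono, hc, hdim⟩ := ih
    refine ⟨fun j => if j ≤ Module.finrank F J then J else c j, fun i j hij => ?_, fun j => ?_,
      fun j h₁ h₂ => ?_⟩
    · dsimp only
      split_ifs with hi hj hj
      · exact le_rfl
      · exact hle.trans (hc j)
      · omega
      · exact hmono hij
    · dsimp only
      split_ifs
      · exact le_rfl
      · exact hle.trans (hc j)
    · change Module.finrank F (if j ≤ Module.finrank F J then J else c j : LieIdeal F L) = j
      rcases h₁.eq_or_lt with rfl | hj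
      · rw [if_pos le_rfl]
      · rw [if_neg hj.not_ge]
        exact hdim j (by omega) h₂

variable [FiniteDimensional F L]

/-- A chief factor `A / K` containing a one-dimensional ideal of `L / K` is one-dimensional. -/
theorem finrank_eq_add_one_of_covBy {K A : LieIdeal F L} (hKA : K ⋖ A) {a : L} (ha : a ∈ A)
    (haK : a ∉ K) (hline : ∀ t : L, ∃ μ : F, ⁅t, a⁆ - μ • a ∈ K) :
    Module.finrank F A = Module.finrank F K + 1 := by
  let P : LieIdeal F L :=
    { K.toSubmodule ⊔ Submodule.span F {a} with
      lie_mem := by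
        intro t m hm
        obtain ⟨k, hk, z, hz, rfl⟩ := Submodule.mem_sup.1 hm
        obtain ⟨r, rfl⟩ := Submodule.mem_span_singleton.1 hz
        obtain ⟨μ, hμ⟩ := hline t
        refine Submodule.mem_sup.2 ⟨⁅t, k⁆ + r • (⁅t, a⁆ - μ • a),
          add_mem (lie_mem_right F L K t k hk) (K.smul_mem r hμ), (r * μ) • a,
          Submodule.smul_mem _ _ (Submodule.mem_span_singleton_self a), ?_⟩
        rw [lie_add, lie_smul, smul_sub, mul_smul]
        abel }
  have hP : P.toSubmodule = K.toSubmodule ⊔ Submodule.span F {a} := rfl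
  have haP : a ∈ P := (le_sup_right : _ ≤ K.toSubmodule ⊔ Submodule.span F {a})
    (Submodule.mem_span_singleton_self a)
  have hKP : K ≤ P := (le_sup_left : K.toSubmodule ≤ K.toSubmodule ⊔ Submodule.span F {a})
  have hPA : P ≤ A := by
    have : K.toSubmodule ⊔ Submodule.span F {a} ≤ A.toSubmodule :=
      sup_le hKA.le ((Submodule.span_singleton_le_iff_mem _ _).2 ha)
    exact this
  have hPeq : P = A := (hKA.eq_or_eq hKP hPA).resolve_left fun h => haK (h ▸ haP)
  have h₁ : Module.finrank F A.toSubmodule ≤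
      Module.finrank F K.toSubmodule + Module.finrank F (Submodule.span F {a}) := by
    rw [← hPeq, hP]
    exact Submodule.finrank_add_le_finrank_add_finrank _ _
  have h₂ : Module.finrank F (Submodule.span F {a}) = 1 :=
    finrank_span_singleton fun h => haK (h ▸ K.zero_mem)
  have h₃ : Module.finrank F K.toSubmodule < Module.finrank F A.toSubmodule :=
    Submodule.finrank_lt_finrank_of_lt hKA.lt
  change Module.finrank F A.toSubmodule = Module.finrank F K.toSubmodule + 1
  omega

/-- Let `A / K` be a chief factor of dimension different from one, and let `B = A + F b` be an ideal
such that `B / A` affords the character `ℓ`. If `J` lies in a flag of ideals going up to `L` and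
acts on `B / K` through `ℓ`, then `A / K` has an `L`-invariant complement in `B / K`. -/
theorem HasFlagAbove.exists_invariant_complement {K A B J : LieIdeal F L} (hJflag : HasFlagAbove J)
    (hKA : K ⋖ A) (hrank : Module.finrank F A ≠ Module.finrank F K + 1) (hAB : A ≤ B)
    {ℓ : L →ₗ[F] F} (hℓ : ∀ s t : L, ℓ ⁅s, t⁆ = 0) {b : L} (hb : b ∈ B)
    (hBspan : ∀ v ∈ B, ∃ r : F, v - r • b ∈ A) (hbℓ : ∀ t : L, ⁅t, b⁆ - ℓ t • b ∈ A)
    (hJ : ∀ j ∈ J, ∀ v ∈ B, ⁅j, v⁆ - ℓ j • v ∈ K) :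
    ∃ B' : LieIdeal F L, A ⊓ B' = K ∧ A ⊔ B' = B := by
  induction hJflag with
  | top =>
    obtain ⟨a, ha, haK⟩ := SetLike.exists_of_lt hKA.lt
    exact absurd (finrank_eq_add_one_of_covBy hKA ha haK fun t =>
      ⟨ℓ t, hJ t (LieSubmodule.mem_top t) a (hAB ha)⟩) hrank
  | @step J J' hle hrankJ hflag ih =>
    obtain ⟨c, hcJ', f, -, -, hf⟩ := exists_linearForm_of_finrank_eq_add_one
      (J := J.toSubmodule) (J' := J'.toSubmodule) hle hrankJ
    by_cases hcB : ∀ v ∈ B, ⁅c, v⁆ - ℓ c • v ∈ K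
    · refine ih fun j hj v hv => ?_
      have h := add_mem (hJ _ (hf j hj) v hv) (K.smul_mem (f j) (hcB v hv))
      convert h using 1
      simp only [map_sub, map_smul, sub_lie, smul_lie, smul_eq_mul, sub_smul, smul_sub, mul_smul]
      abel
    have hc : ∀ t : L, ∃ μ : F, ⁅t, c⁆ - μ • c ∈ J := fun t =>
      ⟨_, hf _ (lie_mem_right F L J' t c hcJ')⟩
    let Z : LieIdeal F L := twistedKer ℓ hℓ K B J c hc hJ
    have hKB : K ≤ B := hKA.le.trans hAB
    have hstab : ∀ (I : LieIdeal F L), ∀ x ∈ I, ⁅c, x⁆ - ℓ c • x ∈ I := fun I x hx =>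
      sub_mem (lie_mem_right F L I c x hx) (I.smul_mem _ hx)
    have hKZ : K ≤ Z := fun x hx => ⟨hKB hx, hstab K x hx⟩
    rcases hKA.eq_or_eq (le_inf hKA.le hKZ) inf_le_left with h | h
    · refine ⟨Z, h, le_antisymm (sup_le hAB fun x hx => hx.1) fun v hv => ?_⟩
      obtain ⟨r, hr⟩ := hBspan v hv
      obtain ⟨a, ha, haK⟩ := exists_sub_mem_of_injective_mod (K := K.toSubmodule)
        (A := A.toSubmodule) (LieAlgebra.ad F L c - ℓ c • LinearMap.id) (hstab K) (hstab A)
        (fun x hx hx' => h.le ⟨hx, hAB hx, hx'⟩) (hbℓ c)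
      have hbZ : b - a ∈ Z := by
        refine ⟨sub_mem hb (hAB ha), ?_⟩
        rw [LieSubmodule.mem_toSubmodule] at haK
        convert haK using 1
        simp only [LinearMap.sub_apply, LieAlgebra.ad_apply, LinearMap.smul_apply,
          LinearMap.id_apply, lie_sub, smul_sub]
        abel
      refine LieSubmodule.mem_sup _ _ _ |>.2
        ⟨_, add_mem hr (A.smul_mem r ha), _, Z.smul_mem r hbZ, ?_⟩
      rw [smul_sub]
      abel
    · have hAZ : ∀ a ∈ A, ⁅c, a⁆ - ℓ c • a ∈ K := fun a ha => (inf_eq_left.1 h ha).2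
      refine absurd (finrank_eq_add_one_of_covBy hKA (hbℓ c) (fun hcb => hcB fun v hv => ?_)
        fun t => ?_) hrank
      · obtain ⟨r, hr⟩ := hBspan v hv
        have := add_mem (hAZ _ hr) (K.smul_mem r hcb)
        convert this using 1
        simp only [lie_sub, lie_smul, smul_sub, smul_comm r (ℓ c)]
        abel
      · obtain ⟨μ, hμ⟩ := hc t
        refine ⟨ℓ t + μ, ?_⟩
        have := add_mem (hAZ _ (hbℓ t)) (hJ _ hμ b hb)
        convert this using 1
        simp only [map_sub, map_smul, hℓ, sub_lie, smul_lie, lie_sub, lie_smul, lie_lie t c b,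
          smul_eq_mul, zero_sub, neg_smul, smul_sub, mul_smul, add_smul, smul_comm (ℓ c) (ℓ t)]
        abel

/-- An abelian chief factor `A / K` of dimension different from one, such that `L / A` is
supersolvable, is supplemented in `L` by a proper subalgebra. -/
theorem HasFlagAbove.exists_supplement {K A : LieIdeal F L} (hA : HasFlagAbove A) (hKA : K ⋖ A)
    (habel : ∀ x ∈ A, ∀ y ∈ A, ⁅x, y⁆ ∈ K)
    (hrank : Module.finrank F A ≠ Module.finrank F K + 1) :
    ∃ M : LieSubalgebra F L, (K : LieSubalgebra F L) ≤ M ∧ M ≠ ⊤ ∧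
      M ⊔ (A : LieSubalgebra F L) = ⊤ := by
  induction hA generalizing K with
  | top =>
    obtain ⟨a, ha, haK⟩ := SetLike.exists_of_lt hKA.lt
    exact absurd (finrank_eq_add_one_of_covBy hKA ha haK fun t =>
      ⟨0, by simpa using habel t (LieSubmodule.mem_top t) a ha⟩) hrank
  | @step A B hAB hrankB hflag ih =>
    obtain ⟨b, hbB, f, hfA, hfb, hf⟩ := exists_linearForm_of_finrank_eq_add_one
      (J := A.toSubmodule) (J' := B.toSubmodule) hAB hrankB
    have hb : ∀ t : L, ⁅t, b⁆ - f ⁅t, b⁆ • b ∈ A := fun t => hf _ (lie_mem_right F L B t b hbB)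
    let Z : LieIdeal F L := twistedKer 0 (by simp) K A A b (fun t => ⟨_, hb t⟩)
      (by simpa using habel)
    have hmemZ : ∀ x, x ∈ Z ↔ x ∈ A ∧ ⁅b, x⁆ ∈ K := fun x => by
      simp [Z, mem_twistedKer]
    have hKZ : K ≤ Z := fun x hx => (hmemZ x).2 ⟨hKA.le hx, lie_mem_right F L K b x hx⟩
    rcases hKA.eq_or_eq hKZ fun x hx => hx.1 with h | h
    · let M : LieSubalgebra F L :=
        { carrier := {y | ∃ r : F, ⁅y, b⁆ - r • b ∈ K}
          zero_mem' := ⟨0, by simp⟩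
          add_mem' := by
            rintro x y ⟨r, hr⟩ ⟨s, hs⟩
            refine ⟨r + s, ?_⟩
            convert add_mem hr hs using 1
            rw [add_lie, add_smul]
            abel
          smul_mem' := by
            rintro q x ⟨r, hr⟩
            refine ⟨q * r, ?_⟩
            have := K.smul_mem q hr
            rwa [smul_sub, ← smul_lie, ← mul_smul] at this
          lie_mem' := by
            rintro x y ⟨r, hr⟩ ⟨s, hs⟩
            refine ⟨0, ?_⟩
            have h₁ := add_mem (lie_mem_right F L K x _ hs) (K.smul_mem s hr)
            have h₂ := add_mem (lie_mem_right F L K y _ hr) (K.smul_mem r hs)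
            convert sub_mem h₁ h₂ using 1
            simp only [lie_lie, lie_sub, lie_smul, smul_sub, smul_comm r s, zero_smul]
            abel }
      refine ⟨M, fun x hx => ⟨0, ?_⟩, fun hM => ?_, eq_top_iff.2 fun y _ => ?_⟩
      · simpa using lie_mem_left F L K x b hx
      · obtain ⟨a, ha, haK⟩ := SetLike.exists_of_lt hKA.lt
        obtain ⟨r, hr⟩ : a ∈ M := hM ▸ LieSubalgebra.mem_top a
        have hr0 : r = 0 := by
          have h₁ := hfA _ (hKA.le hr)
          have h₂ := hfA _ (lie_mem_left F L A a b ha)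
          simpa [h₂, hfb] using h₁
        refine haK (h.le ((hmemZ a).2 ⟨ha, ?_⟩))
        rw [← lie_skew]
        exact neg_mem (by simpa [hr0] using hr)
      · obtain ⟨a, ha, haK⟩ := exists_sub_mem_of_injective_mod (K := K.toSubmodule)
          (A := A.toSubmodule) (LieAlgebra.ad F L b) (lie_mem_right F L K b)
          (lie_mem_right F L A b) (fun x hx hx' => h.le ((hmemZ x).2 ⟨hx, hx'⟩)) (hb y)
        have hyM : y + a ∈ M := by
          refine ⟨f ⁅y, b⁆, ?_⟩
          rw [LieSubmodule.mem_toSubmodule] at haK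
          convert haK using 1
          rw [add_lie, LieAlgebra.ad_apply, ← lie_skew b a]
          abel
        have := sub_mem ((le_sup_left : M ≤ M ⊔ (A : LieSubalgebra F L)) hyM)
          ((le_sup_right : (A : LieSubalgebra F L) ≤ M ⊔ (A : LieSubalgebra F L)) ha)
        simpa using this
    · have hbA : ∀ a ∈ A, ⁅b, a⁆ ∈ K := fun a ha => ((hmemZ a).1 (h.ge ha)).2
      have hBabel : ∀ x ∈ B, ∀ y ∈ B, ⁅x, y⁆ ∈ K := by
        intro x hx y hy
        have hx' := hf x hx
        have hy' := hf y hy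
        have h₁ := habel _ hx' _ hy'
        have h₂ := K.smul_mem (f y) (hbA _ hx')
        have h₃ := K.smul_mem (f x) (hbA _ hy')
        convert add_mem (sub_mem h₁ h₂) h₃ using 1
        simp only [lie_sub, sub_lie, lie_smul, smul_lie, lie_self, smul_zero, sub_zero,
          ← lie_skew b x, smul_neg]
        abel
      let ℓ : L →ₗ[F] F := -(f ∘ₗ LieAlgebra.ad F L b)
      have hℓt : ∀ t, ℓ t = f ⁅t, b⁆ := fun t => by
        rw [← lie_skew t b, map_neg]
        rfl
      have hfB : ∀ s, ∀ v ∈ B, f ⁅s, v⁆ = f v * f ⁅s, b⁆ := fun s v hv => by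
        have := hfA _ (lie_mem_right F L A s _ (hf v hv))
        rw [lie_sub, lie_smul, map_sub, map_smul, smul_eq_mul] at this
        exact sub_eq_zero.1 this
      have hℓ : ∀ s t : L, ℓ ⁅s, t⁆ = 0 := fun s t => by
        rw [hℓt, lie_lie, map_sub, hfB s _ (lie_mem_right F L B t b hbB),
          hfB t _ (lie_mem_right F L B s b hbB), mul_comm, sub_self]
      obtain ⟨B', hinf, hsup⟩ := hflag.exists_invariant_complement hKA hrank hAB hℓ hbB
        (fun v hv => ⟨_, hf v hv⟩) (fun t => by rw [hℓt]; exact hb t) (fun j hj v hv => by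
          have : f ⁅j, b⁆ = 0 := hfA _ (hKA.le (hBabel j hj b hbB))
          rw [hℓt, this, zero_smul, sub_zero]
          exact hBabel j hj v hv)
      have hKB' : K ≤ B' := hinf ▸ inf_le_right
      have hB'B : B' ⋖ B := hsup ▸ (hinf.symm ▸ hKA : A ⊓ B' ⋖ A).sup_of_inf_left
      have hdim := Submodule.finrank_sup_add_finrank_inf_eq A.toSubmodule B'.toSubmodule
      rw [← LieSubmodule.sup_toSubmodule, ← LieSubmodule.inf_toSubmodule, hinf, hsup] at hdim
      obtain ⟨M, hM, hMtop, hMB⟩ := ih hB'B (fun x hx y hy => hKB' (hBabel x hx y hy)) (by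
        change Module.finrank F B.toSubmodule ≠ Module.finrank F B'.toSubmodule + 1
        change Module.finrank F A.toSubmodule ≠ Module.finrank F K.toSubmodule + 1 at hrank
        omega)
      refine ⟨M, le_trans (fun x hx => hKB' hx) hM, hMtop, top_le_iff.1 (hMB ▸ ?_)⟩
      refine sup_le le_sup_left fun x hx => ?_
      have hx : x ∈ A ⊔ B' := hsup ▸ hx
      obtain ⟨a, ha, z, hz, rfl⟩ := (LieSubmodule.mem_sup _ _ _).1 hx
      exact add_mem ((le_sup_right : (A : LieSubalgebra F L) ≤ M ⊔ (A : LieSubalgebra F L)) ha)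
        ((le_sup_left : M ≤ M ⊔ (A : LieSubalgebra F L)) (hM hz))

/-- If only `L` itself is a subalgebra containing `K` and supplementing the ideal `A`, then the
inner derivations defined by elements of `A` are nilpotent modulo `K`. -/
theorem exists_ad_pow_mem_of_forall_supplement_eq_top {K A : LieIdeal F L}
    (hsupp : ∀ M : LieSubalgebra F L, (K : LieSubalgebra F L) ≤ M →
      M ⊔ (A : LieSubalgebra F L) = ⊤ → M = ⊤) {x : L} (hx : x ∈ A) (y : L) :
    ∃ n, ((LieAlgebra.ad F L x) ^ n) y ∈ K := by
  let M : LieSubalgebra F L := (LieSubalgebra.engel F (lieQuotMk K x)).comap (lieQuotMk K)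
  have hmem : ∀ z, z ∈ M ↔ ∃ n, ((LieAlgebra.ad F L x) ^ n) z ∈ K := fun z => by
    change lieQuotMk K z ∈ LieSubalgebra.engel F (lieQuotMk K x) ↔ _
    simp_rw [LieSubalgebra.mem_engel_iff, lieQuotMk_ad_pow, lieQuotMk_eq_zero]
  rw [← hmem, hsupp M (fun z hz => (hmem z).2 ⟨0, hz⟩) (eq_top_iff.2 fun z _ => ?_)]
  · exact LieSubalgebra.mem_top y
  obtain ⟨n, hn, hn0⟩ := ((LieAlgebra.ad F L x).eventually_isCompl_ker_pow_range_pow.and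
    (Filter.eventually_gt_atTop 0)).exists
  obtain ⟨u, hu, v, hv, rfl⟩ : ∃ u ∈ LinearMap.ker ((LieAlgebra.ad F L x) ^ n),
      ∃ v ∈ LinearMap.range ((LieAlgebra.ad F L x) ^ n), u + v = z :=
    Submodule.mem_sup.1 (hn.sup_eq_top ▸ Submodule.mem_top)
  refine add_mem ((le_sup_left : M ≤ M ⊔ (A : LieSubalgebra F L)) ((hmem u).2 ⟨n, ?_⟩))
    ((le_sup_right : (A : LieSubalgebra F L) ≤ M ⊔ (A : LieSubalgebra F L)) ?_)
  · rw [LinearMap.mem_ker.1 hu]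
    exact K.zero_mem
  · obtain ⟨w, rfl⟩ := hv
    obtain ⟨m, rfl⟩ := Nat.exists_eq_add_one_of_ne_zero hn0.ne'
    rw [pow_succ', Module.End.mul_apply]
    exact lie_mem_left F L A x _ hx

/-- A Frattini chief factor is abelian. -/
theorem lie_mem_of_covBy_of_forall_supplement_eq_top {K A : LieIdeal F L} (hKA : K ⋖ A)
    (hsupp : ∀ M : LieSubalgebra F L, (K : LieSubalgebra F L) ≤ M →
      M ⊔ (A : LieSubalgebra F L) = ⊤ → M = ⊤) :
    ∀ x ∈ A, ∀ y ∈ A, ⁅x, y⁆ ∈ K := by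
  let N : LieSubmodule F L A := LieSubmodule.comap (LieSubmodule.incl A) K
  have hN : ∀ a : A, (LieSubmodule.Quotient.mk a : A ⧸ N) = 0 ↔ (a : L) ∈ K := fun a =>
    LieSubmodule.Quotient.mk_eq_zero N
  have hpow : ∀ (x a : A) (n : ℕ), ((LieModule.toEnd F A (A ⧸ N) x) ^ n)
      (LieSubmodule.Quotient.mk a) = LieSubmodule.Quotient.mk (((LieAlgebra.ad F A x) ^ n) a) := by
    intro x a n
    induction n with
    | zero => simp
    | succ n ih =>
      rw [pow_succ', pow_succ', Module.End.mul_apply, Module.End.mul_apply, ih]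
      rfl
  have hcoe : ∀ (x a : A) (n : ℕ), ((((LieAlgebra.ad F A x) ^ n) a : A) : L) =
      ((LieAlgebra.ad F L x) ^ n) a := by
    intro x a n
    induction n with
    | zero => simp
    | succ n ih =>
      rw [pow_succ', pow_succ', Module.End.mul_apply, Module.End.mul_apply, ← ih]
      rfl
  have hnil : LieModule.IsNilpotent A (A ⧸ N) := by
    refine (LieModule.isNilpotent_iff_forall' (R := F)).2 fun x => ?_
    refine Module.End.isNilpotent_iff_of_finite.2 fun q => ?_
    obtain ⟨a, rfl⟩ := LieSubmodule.Quotient.surjective_mk' N q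
    obtain ⟨n, hn⟩ := exists_ad_pow_mem_of_forall_supplement_eq_top hsupp x.2 (a : L)
    refine ⟨n, (hpow x a n).trans ((hN _).2 ?_)⟩
    rwa [hcoe]
  obtain ⟨a₀, ha₀, ha₀K⟩ := SetLike.exists_of_lt hKA.lt
  have : Nontrivial (A ⧸ N) := ⟨LieSubmodule.Quotient.mk ⟨a₀, ha₀⟩, 0, fun h => ha₀K ((hN _).1 h)⟩
  obtain ⟨⟨q, hq⟩, hq0⟩ := @exists_ne _
    (LieModule.nontrivial_max_triv_of_isNilpotent F A (A ⧸ N)) 0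
  obtain ⟨z, rfl⟩ := LieSubmodule.Quotient.surjective_mk' N q
  have hzK : (z : L) ∉ K := fun h => hq0 (Subtype.ext ((hN z).2 h))
  have hzA : ∀ x ∈ A, ⁅x, (z : L)⁆ ∈ K := fun x hx =>
    (hN ⁅(⟨x, hx⟩ : A), z⁆).1 (hq ⟨x, hx⟩)
  let Z : LieIdeal F L :=
    { carrier := {v | v ∈ A ∧ ∀ x ∈ A, ⁅x, v⁆ ∈ K}
      zero_mem' := by simp
      add_mem' := fun hv hw => ⟨add_mem hv.1 hw.1, fun x hx => by
        rw [lie_add]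
        exact add_mem (hv.2 x hx) (hw.2 x hx)⟩
      smul_mem' := fun r v hv => ⟨A.smul_mem r hv.1, fun x hx => by
        rw [lie_smul]
        exact K.smul_mem r (hv.2 x hx)⟩
      lie_mem := by
        rintro t v ⟨hv, hv'⟩
        refine ⟨lie_mem_right F L A t v hv, fun x hx => ?_⟩
        rw [leibniz_lie]
        exact add_mem (hv' _ (lie_mem_left F L A x t hx)) (lie_mem_right F L K t _ (hv' x hx)) }
  have hKZ : K ≤ Z := fun v hv => ⟨hKA.le hv, fun x _ => lie_mem_right F L K x v hv⟩
  have hZ : Z = A := (hKA.eq_or_eq hKZ fun v hv => hv.1).resolve_left fun h =>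
    hzK (h.le ⟨z.2, hzA⟩)
  exact fun x hx y hy => (hZ.ge hy).2 x hx

theorem finrank_quotCore (C : LieIdeal F L) (hC : strictCore (C : LieSubalgebra F L) ≤ C) :
    Module.finrank F (quotCore (C : LieSubalgebra F L)) +
      Module.finrank F (strictCore (C : LieSubalgebra F L)) = Module.finrank F C := by
  have h := Submodule.finrank_quotient_add_finrank
    (LieIdeal.comap (C : LieSubalgebra F L).incl (strictCore (C : LieSubalgebra F L))).toSubmodule
  have h' : Module.finrank F (LieIdeal.comap (C : LieSubalgebra F L).incl
      (strictCore (C : LieSubalgebra F L))).toSubmodule =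
      Module.finrank F (strictCore (C : LieSubalgebra F L)) :=
    (Submodule.comapSubtypeEquivOfLe (p := (strictCore (C : LieSubalgebra F L)).toSubmodule)
      (q := C.toSubmodule) hC).finrank_eq
  rw [h'] at h
  exact h

/-- If every ideal completion of every maximal subalgebra has a one-dimensional quotient by its
strict core, then every chief factor `A / K` with `K ≤ M` and `A ≰ M` for some maximal subalgebra
`M` is one-dimensional. -/
theorem finrank_eq_add_one_of_not_le_coatom
    (H : ∀ M : LieSubalgebra F L, IsCoatom M → ∀ C : LieIdeal F L,
      IsCompletion M (C : LieSubalgebra F L) →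
        Module.finrank F (quotCore (C : LieSubalgebra F L)) = 1)
    {K A : LieIdeal F L} (hKA : K ⋖ A) {M : LieSubalgebra F L} (hM : IsCoatom M)
    (hKM : (K : LieSubalgebra F L) ≤ M) (hAM : ¬ (A : LieSubalgebra F L) ≤ M) :
    Module.finrank F A = Module.finrank F K + 1 := by
  have : WellFoundedLT (LieIdeal F L) := LieSubmodule.wellFoundedLT_of_isArtinian F L L
  obtain ⟨I, ⟨hIA, hIM⟩, hmin⟩ := exists_minimal_of_wellFoundedLT
    (fun I : LieIdeal F L => I ≤ A ∧ ¬ (I : LieSubalgebra F L) ≤ M) ⟨A, le_rfl, hAM⟩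
  have hI : IsCompletion M (I : LieSubalgebra F L) := by
    refine ⟨hIM, fun J hJ => ?_⟩
    have hJI : J < I := hJ
    by_contra hJM
    exact hJI.not_ge (hmin ⟨hJI.le.trans hIA, hJM⟩ hJI.le)
  have hcov := hI.strictCore_covBy
  have hcore := finrank_quotCore I hcov.le
  rw [H M hM I hI] at hcore
  have hsup : I ⊔ K = A := (hKA.eq_or_eq le_sup_right (sup_le hIA hKA.le)).resolve_left fun h =>
    hIM (le_trans (show I ≤ K from h ▸ le_sup_left) hKM)
  have hcoreK : strictCore (I : LieSubalgebra F L) ≤ K := by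
    refine le_sup_left.trans ((hKA.eq_or_eq le_sup_right
      (sup_le (hcov.le.trans hIA) hKA.le)).resolve_right fun h => hAM fun x hx => ?_).le
    obtain ⟨y, hy, z, hz, rfl⟩ := (LieSubmodule.mem_sup _ _ _).1 (h.ge hx)
    exact add_mem (hI.strictCore_toLieSubalgebra_le hy) (hKM hz)
  have hinf : I ⊓ K = strictCore (I : LieSubalgebra F L) :=
    le_antisymm (le_strictCore (lt_of_le_of_ne inf_le_left fun h =>
      hIM (le_trans (show I ≤ K from inf_eq_left.1 h) hKM))) (le_inf hcov.le hcoreK)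
  have hdim := Submodule.finrank_sup_add_finrank_inf_eq I.toSubmodule K.toSubmodule
  rw [← LieSubmodule.sup_toSubmodule, ← LieSubmodule.inf_toSubmodule, hinf, hsup] at hdim
  change Module.finrank F A.toSubmodule = Module.finrank F K.toSubmodule + 1
  change 1 + Module.finrank F (strictCore (I : LieSubalgebra F L)).toSubmodule =
    Module.finrank F I.toSubmodule at hcore
  omega

/-- If every ideal completion of every maximal subalgebra has a one-dimensional quotient by its
strict core, then every chief factor `A / K` with `L / A` supersolvable is one-dimensional. -/
theorem HasFlagAbove.finrank_eq_add_one
    (H : ∀ M : LieSubalgebra F L, IsCoatom M → ∀ C : LieIdeal F L,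
      IsCompletion M (C : LieSubalgebra F L) →
        Module.finrank F (quotCore (C : LieSubalgebra F L)) = 1)
    {K A : LieIdeal F L} (hA : HasFlagAbove A) (hKA : K ⋖ A) :
    Module.finrank F A = Module.finrank F K + 1 := by
  by_contra hrank
  have hsupp : ∀ M : LieSubalgebra F L, (K : LieSubalgebra F L) ≤ M →
      M ⊔ (A : LieSubalgebra F L) = ⊤ → M = ⊤ := by
    intro M hKM hMA
    refine (eq_top_or_exists_le_coatom M).resolve_right ?_
    rintro ⟨M', hM', hMM'⟩
    refine hrank (finrank_eq_add_one_of_not_le_coatom H hKA hM' (hKM.trans hMM') fun hAM' => ?_)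
    exact hM'.1 (top_le_iff.1 (hMA ▸ sup_le hMM' hAM'))
  obtain ⟨M, hKM, hM, hMA⟩ := hA.exists_supplement hKA
    (lie_mem_of_covBy_of_forall_supplement_eq_top hKA hsupp) hrank
  exact hM (hsupp M hKM hMA)

theorem HasFlagAbove.isSupersolvableLieAlgebra (h : HasFlagAbove (⊥ : LieIdeal F L)) :
    IsSupersolvableLieAlgebra F L := by
  obtain ⟨c, hmono, -, hdim⟩ := h.exists_chain
  have hbot : Module.finrank F (⊥ : LieIdeal F L) = 0 := finrank_bot F L
  have hdim' : ∀ j ≤ Module.finrank F L, Module.finrank F (c j).toSubmodule = j := fun j hj =>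
    hdim j (by omega) hj
  refine ⟨Module.finrank F L, fun j => c j, ?_, ?_, fun i j hij => hmono hij, fun j =>
    hdim' j (Nat.lt_succ_iff.1 j.2)⟩
  · rw [← LieSubmodule.toSubmodule_eq_bot]
    exact Submodule.finrank_eq_zero.1 (hdim' 0 (Nat.zero_le _))
  · rw [← LieSubmodule.toSubmodule_eq_top]
    exact Submodule.eq_top_of_finrank_eq (hdim' _ le_rfl)

/-- If the chief factors directly below ideals with a flag above them are one-dimensional, then
there is a complete flag of ideals. -/
theorem hasFlagAbove_bot
    (h : ∀ K A : LieIdeal F L, HasFlagAbove A → K ⋖ A →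
      Module.finrank F A = Module.finrank F K + 1) : HasFlagAbove (⊥ : LieIdeal F L) := by
  have : WellFoundedLT (LieIdeal F L) := LieSubmodule.wellFoundedLT_of_isArtinian F L L
  obtain ⟨A, hA, hmin⟩ := exists_minimal_of_wellFoundedLT
    (fun A : LieIdeal F L => HasFlagAbove A) ⟨⊤, .top⟩
  rcases eq_or_ne A ⊥ with rfl | hne
  · exact hA
  obtain ⟨K, hK⟩ : ∃ K, K ⋖ A := by
    obtain ⟨K, -, hK⟩ := exists_le_covBy_of_lt (bot_lt_iff_ne_bot.2 hne)
    exact ⟨K, hK⟩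
  exact absurd (hmin (.step hK.le (h K A hA hK) hA) hK.le) hK.lt.not_ge

/-- In a supersolvable Lie algebra every chief factor is one-dimensional. -/
theorem IsSupersolvableLieAlgebra.finrank_eq_add_one (h : IsSupersolvableLieAlgebra F L)
    {K A : LieIdeal F L} (hKA : K ⋖ A) : Module.finrank F A = Module.finrank F K + 1 := by
  obtain ⟨n, I, hI0, hIn, hmono, hdim⟩ := h
  have hexists : ∃ j : ℕ, ∃ hj : j < n + 1, A ⊓ I ⟨j, hj⟩ ⊔ K = A :=
    ⟨n, n.lt_succ_self, by
      rw [show (⟨n, n.lt_succ_self⟩ : Fin (n + 1)) = Fin.last n from rfl, hIn, inf_top_eq]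
      exact sup_eq_left.2 hKA.le⟩
  classical
  obtain ⟨hj, hjA⟩ := Nat.find_spec hexists
  have hmin : ∀ i < Nat.find hexists, _ := fun i hi => Nat.find_min hexists hi
  generalize Nat.find hexists = j at hj hjA hmin
  rcases j with _ | j
  · refine absurd hjA ?_
    rw [show (⟨0, hj⟩ : Fin (n + 1)) = 0 from rfl, hI0, inf_bot_eq, bot_sup_eq]
    exact hKA.lt.ne
  have hj' : j < n + 1 := by omega
  have hle : A ⊓ I ⟨j, hj'⟩ ≤ K := by
    refine le_sup_left.trans (hKA.eq_or_eq le_sup_right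
      (sup_le inf_le_left hKA.le) |>.resolve_right fun h => hmin j j.lt_succ_self ⟨hj', h⟩).le
  set P := I ⟨j, hj'⟩
  set Q := I ⟨j + 1, hj⟩
  have hPQ : P ≤ Q := hmono (by simp [Fin.le_def])
  have hrank : Module.finrank F Q = Module.finrank F P + 1 := by
    rw [hdim, hdim]
  obtain ⟨a, ha, haK⟩ : ∃ a ∈ A ⊓ Q, a ∉ K := by
    by_contra! hcon
    exact hKA.lt.ne (hjA ▸ (sup_eq_right.2 (show A ⊓ Q ≤ K from hcon)).symm)
  obtain ⟨c, -, f, hfP, -, hf⟩ := exists_linearForm_of_finrank_eq_add_one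
    (J := P.toSubmodule) (J' := Q.toSubmodule) hPQ hrank
  have hfa : f a ≠ 0 := fun h0 => haK (hle ⟨ha.1, by simpa [h0] using hf a ha.2⟩)
  refine finrank_eq_add_one_of_covBy hKA ha.1 haK fun t => ⟨f ⁅t, a⁆ / f a, hle ⟨?_, ?_⟩⟩
  · exact sub_mem (lie_mem_right F L A t a ha.1) (A.smul_mem _ ha.1)
  · have h₁ := sub_mem (hf _ (lie_mem_right F L Q t a ha.2))
      (Submodule.smul_mem _ (f ⁅t, a⁆ / f a) (hf a ha.2))
    rw [smul_sub, smul_smul, div_mul_cancel₀ _ hfa] at h₁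
    simpa using h₁

end LieIdeals

/-- `L` is supersolvable if and only if for every maximal subalgebra `M` of `L`,
every ideal completion `C` of `M` satisfies `dim (C/k(C)) = 1`. -/
theorem statement7 {F L : Type*} [Field F] [LieRing L] [LieAlgebra F L] [FiniteDimensional F L] :
    IsSupersolvableLieAlgebra F L ↔
      ∀ M : LieSubalgebra F L, IsCoatom M →
        ∀ C : LieIdeal F L, IsCompletion M (C : LieSubalgebra F L) →
          Module.finrank F (quotCore (C : LieSubalgebra F L)) = 1 := by
  refine ⟨fun h M _ C hC => ?_, fun H => ?_⟩
  · have h₁ := h.finrank_eq_add_one hC.strictCore_covBy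
    have h₂ := finrank_quotCore C hC.strictCore_covBy.le
    omega
  · exact (hasFlagAbove_bot fun K A hA hKA =>
      hA.finrank_eq_add_one H hKA).isSupersolvableLieAlgebra
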